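/- Let n ≥ 2, let 𝒳 = {x₁, …, x_n} ⊂ [0,1]^p be n fixed design points with empirical measure P_𝒳 := n^{-1} Σ_{i=1}^n δ_{x_i}, and let f, f₀ : [0,1]^p → ℝ satisfy sup_x |f(x)| ≤ √(log n) and sup_x |f₀(x)| ≤ √(log n). Then for every j ∈ {1,…,p}, the Shapley effects computed under P_𝒳 satisfy |S_{j,P_𝒳}(f) − S_{j,P_𝒳}(f₀)| ≤ 8√(log n) · ‖f − f₀‖_{2,P_𝒳}, where ‖g‖_{2,P_𝒳}² = n^{-1} Σ_{i=1}^n |g(x_i)|². -/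

import Mathlib

open MeasureTheory Finset

/-- The unit hypercube `[0,1]^p`. -/
abbrev UnitCube (p : ℕ) := Fin p → Set.Icc (0 : ℝ) 1

/-- The sub-σ-algebra of `[0,1]^p` generated by the projection onto the coordinates in `P`. -/
def coordSubAlg (p : ℕ) (P : Finset (Fin p)) : MeasurableSpace (UnitCube p) :=
  MeasurableSpace.comap (fun x (i : P) => x i) MeasurableSpace.pi

/-- The cost functional `c_{P,μ}(g) = E[(E[g(X) | X_P])²] - (E[g(X)])²` for `X ∼ μ`,
with `c_{∅,μ}(g) := 0`. -/
noncomputable def cost {p : ℕ} (μ : Measure (UnitCube p)) (P : Finset (Fin p))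
    (g : UnitCube p → ℝ) : ℝ :=
  if P = ∅ then 0 else
    (∫ x, ((μ[g | coordSubAlg p P]) x) ^ 2 ∂μ) - (∫ x, g x ∂μ) ^ 2

/-- The `j`-th Shapley effect under the measure `μ`:
`S_{j,μ}(g) = (p!)⁻¹ ∑_{P ⊆ [p]\{j}} (p - |P| - 1)! |P|! [c_{P∪{j},μ}(g) - c_{P,μ}(g)]`. -/
noncomputable def shapleyEffect {p : ℕ} (μ : Measure (UnitCube p)) (j : Fin p)
    (g : UnitCube p → ℝ) : ℝ :=
  ((p.factorial : ℝ))⁻¹ *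
    ∑ P ∈ (Finset.univ.erase j).powerset,
      ((p - P.card - 1).factorial : ℝ) * (P.card.factorial : ℝ) *
        (cost μ (insert j P) g - cost μ P g)

/-- The empirical probability measure `P_𝒳 = n⁻¹ ∑_{i=1}^n δ_{x_i}` on design points
`x₁, …, x_n ∈ [0,1]^p`. -/
noncomputable def empiricalMeasure {p n : ℕ} (x : Fin n → UnitCube p) :
    Measure (UnitCube p) :=
  (n : ENNReal)⁻¹ • ∑ i : Fin n, Measure.dirac (x i)

/-!
The cost `c_{P,μ}(g)` is the variance of `E[g | X_P]`, also for `P = ∅`. By the law of total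
variance, the increment `c_{P∪{j},μ}(g) - c_{P,μ}(g)` is therefore `Var (T g)` for the linear map
`T g = E[g | X_{P∪{j}}] - E[g | X_P]`, which does not increase the variance. Polarization and the
Cauchy–Schwarz inequality bound the difference of two such increments:
`|Var (T f) - Var (T g)| = |Cov (T (f + g), T (f - g))| ≤ √Var (f + g) √Var (f - g)`.
The Shapley weights sum to `1`, so the Shapley effects satisfy the same bound. If `|f|, |g| ≤ M`,
it is at most `2 M ‖f - g‖₂`, since `√Var (f + g) ≤ 2 M`.
-/

open ProbabilityTheory

section Variance

variable {Ω : Type*} {m₀ : MeasurableSpace Ω} {μ : Measure Ω} {X Y : Ω → ℝ}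

theorem abs_covariance_le_sqrt_variance_mul_sqrt_variance [IsFiniteMeasure μ]
    (hX : MemLp X 2 μ) (hY : MemLp Y 2 μ) :
    |cov[X, Y; μ]| ≤ √Var[X; μ] * √Var[Y; μ] := by
  have variance_line (t : ℝ) :
      Var[t • X + Y; μ] = Var[X; μ] * (t * t) + 2 * cov[X, Y; μ] * t + Var[Y; μ] := by
    rw [variance_add (hX.const_smul t) hY, variance_smul, covariance_smul_left]
    ring
  have discrim_nonpos : discrim Var[X; μ] (2 * cov[X, Y; μ]) Var[Y; μ] ≤ 0 :=
    discrim_le_zero fun t => variance_line t ▸ variance_nonneg _ _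
  rw [← Real.sqrt_mul (variance_nonneg _ _)]
  apply Real.abs_le_sqrt
  rw [discrim] at discrim_nonpos
  linarith

theorem variance_sub_variance_eq_covariance [IsFiniteMeasure μ]
    (hX : MemLp X 2 μ) (hY : MemLp Y 2 μ) :
    Var[X; μ] - Var[Y; μ] = cov[X + Y, X - Y; μ] := by
  rw [covariance_sub_right (hX.add hY) hX hY, covariance_add_left hX hY hX,
    covariance_add_left hX hY hY, covariance_self hX.aemeasurable, covariance_self hY.aemeasurable,
    covariance_comm Y X]
  ring

theorem abs_variance_sub_variance_le [IsFiniteMeasure μ] (hX : MemLp X 2 μ) (hY : MemLp Y 2 μ) :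
    |Var[X; μ] - Var[Y; μ]| ≤ √Var[X + Y; μ] * √Var[X - Y; μ] := by
  rw [variance_sub_variance_eq_covariance hX hY]
  exact abs_covariance_le_sqrt_variance_mul_sqrt_variance (hX.add hY) (hX.sub hY)

theorem sqrt_variance_add_le_of_abs_le [IsProbabilityMeasure μ] {M : ℝ}
    (hX : AEMeasurable X μ) (hY : AEMeasurable Y μ)
    (hXM : ∀ᵐ ω ∂μ, |X ω| ≤ M) (hYM : ∀ᵐ ω ∂μ, |Y ω| ≤ M) :
    √Var[X + Y; μ] ≤ 2 * M := by
  obtain ⟨ω, hω⟩ := hXM.exists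
  have hM : 0 ≤ M := (abs_nonneg _).trans hω
  have sum_mem_Icc : ∀ᵐ ω ∂μ, (X + Y) ω ∈ Set.Icc (-(2 * M)) (2 * M) := by
    filter_upwards [hXM, hYM] with ω hXω hYω
    rw [abs_le] at hXω hYω
    constructor <;> simp only [Pi.add_apply] <;> linarith
  have variance_le := variance_le_sq_of_bounded sum_mem_Icc (hX.add hY)
  rw [Real.sqrt_le_left (by positivity)]
  linarith

end Variance

section ConditionalVariance

variable {Ω : Type*} {m m₁ m₂ m₀ : MeasurableSpace Ω} {μ : Measure Ω} [IsProbabilityMeasure μ]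
  {X Y : Ω → ℝ}

theorem variance_sub_condExp (hm : m ≤ m₀) (hX : MemLp X 2 μ) :
    Var[X - μ[X | m]; μ] = Var[X; μ] - Var[μ[X | m]; μ] := by
  have residual_memLp : MemLp (X - μ[X | m]) 2 μ := hX.sub (hX.condExp one_le_two)
  have residual_integral : μ[X - μ[X | m]] = 0 := by
    rw [integral_sub' (hX.integrable one_le_two) integrable_condExp, integral_condExp hm, sub_self]
  calc Var[X - μ[X | m]; μ]
      = ∫ ω, ((X - μ[X | m]) ^ 2) ω ∂μ :=
        variance_of_integral_eq_zero residual_memLp.aemeasurable residual_integral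
    _ = μ[Var[X; μ | m]] := (integral_condExp hm).symm
    _ = Var[X; μ] - Var[μ[X | m]; μ] :=
        eq_sub_of_add_eq (integral_condVar_add_variance_condExp hm hX)

theorem variance_condExp_le (hm : m ≤ m₀) (hX : MemLp X 2 μ) :
    Var[μ[X | m]; μ] ≤ Var[X; μ] :=
  sub_nonneg.mp (variance_sub_condExp hm hX ▸ variance_nonneg _ _)

theorem variance_condExp_sub_condExp (hm₁₂ : m₁ ≤ m₂) (hm₂ : m₂ ≤ m₀) (hX : MemLp X 2 μ) :
    Var[μ[X | m₂] - μ[X | m₁]; μ] = Var[μ[X | m₂]; μ] - Var[μ[X | m₁]; μ] := by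
  have tower : μ[μ[X | m₂] | m₁] =ᵐ[μ] μ[X | m₁] := condExp_condExp_of_le hm₁₂ hm₂
  have tower_sub : μ[X | m₂] - μ[μ[X | m₂] | m₁] =ᵐ[μ] μ[X | m₂] - μ[X | m₁] :=
    Filter.EventuallyEq.rfl.sub tower
  rw [← variance_congr tower_sub, ← variance_congr tower]
  exact variance_sub_condExp (hm₁₂.trans hm₂) (hX.condExp one_le_two)

theorem variance_condExp_sub_condExp_le (hm₁₂ : m₁ ≤ m₂) (hm₂ : m₂ ≤ m₀) (hX : MemLp X 2 μ) :
    Var[μ[X | m₂] - μ[X | m₁]; μ] ≤ Var[X; μ] :=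
  calc Var[μ[X | m₂] - μ[X | m₁]; μ]
      = Var[μ[X | m₂]; μ] - Var[μ[X | m₁]; μ] := variance_condExp_sub_condExp hm₁₂ hm₂ hX
    _ ≤ Var[μ[X | m₂]; μ] := sub_le_self _ (variance_nonneg _ _)
    _ ≤ Var[X; μ] := variance_condExp_le hm₂ hX

theorem abs_variance_condExp_increment_sub_le (hm₁₂ : m₁ ≤ m₂) (hm₂ : m₂ ≤ m₀)
    (hX : MemLp X 2 μ) (hY : MemLp Y 2 μ) :
    |(Var[μ[X | m₂]; μ] - Var[μ[X | m₁]; μ]) - (Var[μ[Y | m₂]; μ] - Var[μ[Y | m₁]; μ])| ≤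
      √Var[X + Y; μ] * √Var[X - Y; μ] := by
  have increment_memLp {Z : Ω → ℝ} (hZ : MemLp Z 2 μ) : MemLp (μ[Z | m₂] - μ[Z | m₁]) 2 μ :=
    (hZ.condExp one_le_two).sub (hZ.condExp one_le_two)
  have hX' := hX.integrable one_le_two
  have hY' := hY.integrable one_le_two
  have increment_add : (μ[X | m₂] - μ[X | m₁]) + (μ[Y | m₂] - μ[Y | m₁]) =ᵐ[μ]
      μ[X + Y | m₂] - μ[X + Y | m₁] := by
    filter_upwards [condExp_add hX' hY' m₁, condExp_add hX' hY' m₂] with ω h₁ h₂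
    simp only [Pi.add_apply, Pi.sub_apply, h₁, h₂]
    ring
  have increment_sub : (μ[X | m₂] - μ[X | m₁]) - (μ[Y | m₂] - μ[Y | m₁]) =ᵐ[μ]
      μ[X - Y | m₂] - μ[X - Y | m₁] := by
    filter_upwards [condExp_sub hX' hY' m₁, condExp_sub hX' hY' m₂] with ω h₁ h₂
    simp only [Pi.sub_apply, h₁, h₂]
    ring
  rw [← variance_condExp_sub_condExp hm₁₂ hm₂ hX, ← variance_condExp_sub_condExp hm₁₂ hm₂ hY]
  refine (abs_variance_sub_variance_le (increment_memLp hX) (increment_memLp hY)).trans ?_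
  rw [variance_congr increment_add, variance_congr increment_sub]
  gcongr
  · exact variance_condExp_sub_condExp_le hm₁₂ hm₂ (hX.add hY)
  · exact variance_condExp_sub_condExp_le hm₁₂ hm₂ (hX.sub hY)

end ConditionalVariance

section ShapleyEffect

variable {p : ℕ} {μ : Measure (UnitCube p)} {f g : UnitCube p → ℝ}

theorem coordSubAlg_le (P : Finset (Fin p)) : coordSubAlg p P ≤ MeasurableSpace.pi :=
  measurable_iff_comap_le.mp (by fun_prop)

theorem coordSubAlg_mono : Monotone (coordSubAlg p) := by
  intro P Q hPQ
  have restrict_measurable : Measurable fun (y : Q → Set.Icc (0 : ℝ) 1) (i : P) =>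
      y ⟨i, hPQ i.2⟩ := by
    fun_prop
  exact measurable_iff_comap_le.mp (restrict_measurable.comp (comap_measurable _))

theorem coordSubAlg_empty : coordSubAlg p ∅ = ⊥ := by
  rw [coordSubAlg, eq_bot_iff, ← measurable_iff_comap_le]
  exact @measurable_of_subsingleton_codomain _ _ ⊥ MeasurableSpace.pi _ _

theorem cost_eq_variance_condExp [IsProbabilityMeasure μ] (hg : MemLp g 2 μ)
    (P : Finset (Fin p)) : cost μ P g = Var[μ[g | coordSubAlg p P]; μ] := by
  unfold cost
  split_ifs with hP
  · subst hP
    simp [coordSubAlg_empty, condExp_bot, variance_eq_integral aemeasurable_const]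
  · rw [variance_eq_sub (hg.condExp one_le_two), integral_condExp (coordSubAlg_le P)]
    rfl

theorem abs_cost_increment_sub_le [IsProbabilityMeasure μ] (hf : MemLp f 2 μ) (hg : MemLp g 2 μ)
    {P Q : Finset (Fin p)} (hPQ : P ⊆ Q) :
    |(cost μ Q f - cost μ P f) - (cost μ Q g - cost μ P g)| ≤
      √Var[f + g; μ] * √Var[f - g; μ] := by
  simp only [cost_eq_variance_condExp hf, cost_eq_variance_condExp hg]
  exact abs_variance_condExp_increment_sub_le (coordSubAlg_mono hPQ) (coordSubAlg_le Q) hf hg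

theorem sum_powerset_factorial_mul_factorial {α : Type*} (s : Finset α) :
    ∑ P ∈ s.powerset, (#s - #P).factorial * (#P).factorial = (#s + 1).factorial := by
  have each_size : ∀ k ∈ range (#s + 1),
      (#s).choose k • ((#s - k).factorial * k.factorial) = (#s).factorial := by
    intro k hk
    rw [← Nat.choose_mul_factorial_mul_factorial (mem_range_succ_iff.mp hk), smul_eq_mul]
    ring
  rw [sum_powerset_apply_card fun k => (#s - k).factorial * k.factorial,
    sum_congr rfl each_size, sum_const, card_range, smul_eq_mul, Nat.factorial_succ]

theorem sum_shapley_weights (j : Fin p) :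
    ∑ P ∈ (univ.erase j).powerset, ((p - #P - 1).factorial : ℝ) * ((#P).factorial : ℝ) =
      p.factorial := by
  have card_erase : #(univ.erase j) = p - 1 := by simp
  have card_succ : p - 1 + 1 = p := Nat.sub_add_cancel j.pos
  have weights := sum_powerset_factorial_mul_factorial (univ.erase j)
  simp only [card_erase, card_succ, Nat.sub_right_comm p 1] at weights
  exact_mod_cast weights

theorem stmt12_general [IsProbabilityMeasure μ] (hf : MemLp f 2 μ) (hg : MemLp g 2 μ)
    (j : Fin p) :
    |shapleyEffect μ j f - shapleyEffect μ j g| ≤ √Var[f + g; μ] * √Var[f - g; μ] := by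
  have hp : (0 : ℝ) < p.factorial := mod_cast p.factorial_pos
  unfold shapleyEffect
  rw [← mul_sub, ← sum_sub_distrib, abs_mul, abs_of_pos (inv_pos.mpr hp), inv_mul_le_iff₀ hp,
    ← sum_shapley_weights j, sum_mul]
  refine (abs_sum_le_sum_abs _ _).trans (sum_le_sum fun P _ => ?_)
  rw [← mul_sub, abs_mul, abs_of_nonneg (by positivity)]
  gcongr
  exact abs_cost_increment_sub_le hf hg (subset_insert j P)

theorem abs_shapleyEffect_sub_le_of_abs_le [IsProbabilityMeasure μ] {M : ℝ}
    (hf : AEStronglyMeasurable f μ) (hg : AEStronglyMeasurable g μ)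
    (hfM : ∀ᵐ y ∂μ, |f y| ≤ M) (hgM : ∀ᵐ y ∂μ, |g y| ≤ M) (j : Fin p) :
    |shapleyEffect μ j f - shapleyEffect μ j g| ≤ 2 * M * √Var[f - g; μ] := by
  refine (stmt12_general (MemLp.of_bound hf M hfM) (MemLp.of_bound hg M hgM) j).trans ?_
  gcongr
  exact sqrt_variance_add_le_of_abs_le hf.aemeasurable hg.aemeasurable hfM hgM

end ShapleyEffect

section EmpiricalMeasure

variable {p n : ℕ} (x : Fin n → UnitCube p)

theorem aestronglyMeasurable_empiricalMeasure {β : Type*} [TopologicalSpace β]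
    [TopologicalSpace.PseudoMetrizableSpace β] (g : UnitCube p → β) :
    AEStronglyMeasurable g (empiricalMeasure x) := by
  rw [empiricalMeasure, ← Measure.sum_fintype]
  exact (AEStronglyMeasurable.sum_measure fun _ => aestronglyMeasurable_dirac).smul_measure _

theorem integral_empiricalMeasure {E : Type*} [NormedAddCommGroup E] [NormedSpace ℝ E]
    [CompleteSpace E] (g : UnitCube p → E) :
    ∫ y, g y ∂(empiricalMeasure x) = (n : ℝ)⁻¹ • ∑ i, g (x i) := by
  rw [empiricalMeasure, integral_smul_measure,
    integral_finsetSum_measure fun i _ => integrable_dirac (by simp)]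
  simp

variable [NeZero n]

instance isProbabilityMeasure_empiricalMeasure : IsProbabilityMeasure (empiricalMeasure x) where
  measure_univ := by simp [empiricalMeasure, ENNReal.inv_mul_cancel, NeZero.ne n]

theorem variance_empiricalMeasure_le (g : UnitCube p → ℝ) :
    Var[g; empiricalMeasure x] ≤ (n : ℝ)⁻¹ * ∑ i, |g (x i)| ^ 2 := by
  refine (variance_le_expectation_sq (aestronglyMeasurable_empiricalMeasure x g)).trans_eq ?_
  simp [integral_empiricalMeasure]

end EmpiricalMeasure

/-- For `n ≥ 2` fixed design points with empirical measure `P_𝒳`, if `f, f₀`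
are bounded in supremum norm by `√(log n)`, then for every `j ∈ [p]`, the Shapley effects
under `P_𝒳` satisfy `|S_{j,P_𝒳}(f) - S_{j,P_𝒳}(f₀)| ≤ 8 √(log n) ‖f - f₀‖_{2,P_𝒳}`. -/
theorem stmt12 {p n : ℕ} (hn : 2 ≤ n) (x : Fin n → UnitCube p)
    (f f₀ : UnitCube p → ℝ)
    (hfb : ∀ y, |f y| ≤ Real.sqrt (Real.log n))
    (hf₀b : ∀ y, |f₀ y| ≤ Real.sqrt (Real.log n)) :
    ∀ j : Fin p,
      |shapleyEffect (empiricalMeasure x) j f - shapleyEffect (empiricalMeasure x) j f₀| ≤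
        8 * Real.sqrt (Real.log n) *
          Real.sqrt ((n : ℝ)⁻¹ * ∑ i : Fin n, |f (x i) - f₀ (x i)| ^ 2) := by
  intro j
  have : NeZero n := ⟨by lia⟩
  refine (abs_shapleyEffect_sub_le_of_abs_le (aestronglyMeasurable_empiricalMeasure x f)
    (aestronglyMeasurable_empiricalMeasure x f₀) (.of_forall hfb) (.of_forall hf₀b) j).trans ?_
  gcongr
  · norm_num
  · exact variance_empiricalMeasure_le x (f - f₀)
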